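/- Consider the spherical loss ℓ(p, y) = 1 − p_y / ‖p‖_2 on Δ_d. Then (a) for every p ∈ Δ_d and y ∈ {1,…,d}, ‖∇_p ℓ(p, y)‖_∞ ≤ 2√d; and (b) given outcomes y_1,…,y_T ∈ {1,…,d}, the Follow-The-Leader predictions p_1 ∈ Δ_d arbitrary, p_t = (1/(t−1)) Σ_{s=1}^{t−1} e_{y_s} for 2 ≤ t ≤ T, satisfy, for every p ∈ Δ_d, Σ_{t=1}^T [ℓ(p_t, y_t) − ℓ(p, y_t)] ≤ 4√d (1 + log T). -/

import Mathlib

open scoped BigOperators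

/-- Bregman divergence `D_ψ(p, q) = ψ(p) − ψ(q) − ⟨∇ψ(q), p − q⟩`. -/
noncomputable def breg {d : ℕ} (ψ : EuclideanSpace ℝ (Fin d) → ℝ)
    (p q : EuclideanSpace ℝ (Fin d)) : ℝ :=
  ψ p - ψ q - @inner ℝ _ _ (gradient ψ q) (p - q)

/-- The probability simplex Δ_d in ℝ^d. -/
def probSimplex (d : ℕ) : Set (EuclideanSpace ℝ (Fin d)) :=
  {p | (∀ j, 0 ≤ p j) ∧ ∑ j, p j = 1}

/-- The `y`-th standard basis vector of ℝ^d. -/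
noncomputable def basisVec {d : ℕ} (y : Fin d) : EuclideanSpace ℝ (Fin d) :=
  EuclideanSpace.single y 1

/-- The spherical loss `ℓ(p, y) = 1 − p_y / ‖p‖₂`. -/
noncomputable def sphLoss {d : ℕ} (p : EuclideanSpace ℝ (Fin d)) (y : Fin d) : ℝ :=
  1 - p y / ‖p‖

/-!
Spherical loss is `1 - ⟪e_y, p / ‖p‖⟫`. The derivative of `p ↦ p / ‖p‖` is `‖p‖⁻¹` times the
orthogonal projection onto `pᗮ`, so the gradient has norm at most `‖p‖⁻¹`, and `‖p‖⁻¹ ≤ √d` as soon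
as the coordinates of `p` sum to `1`.

For the regret, the norm of the vote count `S n = e_{y 0} + ⋯ + e_{y (n - 1)}` serves as a
potential. By Cauchy–Schwarz `‖S T‖` dominates the total reward `∑ ⟪q / ‖q‖, e_{y t}⟫` of any fixed
`q`, while each round after the first increases the norm by at most the reward
`⟪S t / ‖S t‖, e_{y t}⟫` of the leader plus `1 / (2 ‖S t‖)`. Since `t ≤ √d ‖S t‖`, these excesses
add up to at most `√d` times a harmonic number.
-/

section InnerProductSpace

open NormedSpace
open scoped RealInnerProductSpace

variable {E : Type*} [NormedAddCommGroup E] [InnerProductSpace ℝ E]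

lemma inner_normalize_le_norm (q x : E) : ⟪normalize q, x⟫ ≤ ‖x‖ := by
  rcases eq_or_ne q 0 with rfl | hq
  · simp
  · simpa [norm_normalize hq] using real_inner_le_norm (normalize q) x

lemma norm_mul_inner_normalize (x v : E) : ‖x‖ * ⟪normalize x, v⟫ = ⟪x, v⟫ := by
  rw [← real_inner_smul_left, norm_smul_normalize]

lemma norm_sub_inner_smul_le {u : E} (hu : ‖u‖ = 1) (v : E) : ‖v - ⟪v, u⟫ • u‖ ≤ ‖v‖ := by
  refine (sq_le_sq₀ (norm_nonneg _) (norm_nonneg _)).1 ?_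
  rw [norm_sub_sq_real, real_inner_smul_right, norm_smul, hu, mul_one, Real.norm_eq_abs, sq_abs]
  linarith [sq_nonneg ⟪v, u⟫]

lemma norm_add_le_norm_add_inner_normalize {x : E} (hx : x ≠ 0) (v : E) :
    ‖x + v‖ ≤ ‖x‖ + ⟪normalize x, v⟫ + ‖v‖ ^ 2 / (2 * ‖x‖) := by
  have : 0 < ‖x‖ := norm_pos_iff.2 hx
  have amgm : 2 * ‖x‖ * ‖x + v‖ ≤ ‖x‖ ^ 2 + ‖x + v‖ ^ 2 := two_mul_le_add_sq _ _
  rw [norm_add_sq_real, ← norm_mul_inner_normalize] at amgm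
  refine le_of_mul_le_mul_left (amgm.trans_eq ?_) (by positivity : 0 < 2 * ‖x‖)
  field_simp
  ring

lemma norm_sum_range_le_of_le_mul_norm {v : ℕ → E} {c : ℝ} (hv : ∀ t, ‖v t‖ ≤ 1)
    (hc : ∀ n : ℕ, n ≤ c * ‖∑ t ∈ Finset.range n, v t‖) (n : ℕ) :
    ‖∑ t ∈ Finset.range n, v t‖ ≤
      ∑ t ∈ Finset.range n, ⟪normalize (∑ s ∈ Finset.range t, v s), v t⟫ + c * harmonic n := by
  induction n with
  | zero => simp
  | succ n ih =>
    set S := ∑ t ∈ Finset.range n, v t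
    suffices step : ‖S + v n‖ ≤ ‖S‖ + ⟪normalize S, v n⟫ + c * ((n : ℝ) + 1)⁻¹ by
      rw [Finset.sum_range_succ, Finset.sum_range_succ, harmonic_succ]
      push_cast
      linarith
    rcases n.eq_zero_or_pos with rfl | hn
    · have h1 : 1 ≤ c * ‖v 0‖ := by simpa using hc 1
      have hc0 : 0 < c := pos_of_mul_pos_left (by linarith) (norm_nonneg (v 0))
      have hc1 : 1 ≤ c := h1.trans (mul_le_of_le_one_right hc0.le (hv 0))
      simpa [S] using (hv 0).trans hc1
    · have hn1 : (1 : ℝ) ≤ n := Nat.one_le_cast.2 hn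
      have hnS : n ≤ c * ‖S‖ := hc n
      have hS : S ≠ 0 := fun h => by
        rw [h, norm_zero, mul_zero] at hnS
        linarith
      have : 0 < ‖S‖ := norm_pos_iff.2 hS
      have excess : ‖v n‖ ^ 2 / (2 * ‖S‖) ≤ c * ((n : ℝ) + 1)⁻¹ := by
        rw [← div_eq_mul_inv, div_le_div_iff₀ (by positivity) (by positivity)]
        calc ‖v n‖ ^ 2 * ((n : ℝ) + 1)
          _ ≤ (n : ℝ) + 1 :=
            mul_le_of_le_one_left (by positivity) (pow_le_one₀ (norm_nonneg _) (hv n))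
          _ ≤ c * (2 * ‖S‖) := by linarith
      linarith [norm_add_le_norm_add_inner_normalize hS (v n)]

lemma sum_inner_normalize_sub_le_mul_harmonic {v : ℕ → E} {c : ℝ} (hv : ∀ t, ‖v t‖ ≤ 1)
    (hc : ∀ n : ℕ, n ≤ c * ‖∑ t ∈ Finset.range n, v t‖) (q : E) (n : ℕ) :
    ∑ t ∈ Finset.range n,
        (⟪normalize q, v t⟫ - ⟪normalize (∑ s ∈ Finset.range t, v s), v t⟫) ≤ c * harmonic n := by
  rw [Finset.sum_sub_distrib, ← inner_sum]
  linarith [inner_normalize_le_norm q (∑ t ∈ Finset.range n, v t),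
    norm_sum_range_le_of_le_mul_norm hv hc n]

variable [CompleteSpace E]

lemma hasGradientAt_norm {x : E} (hx : x ≠ 0) : HasGradientAt (‖·‖) (normalize x) x := by
  rw [hasGradientAt_iff_hasFDerivAt]
  have hsqrt := (hasFDerivAt_id x).norm_sq.sqrt (by simpa using hx)
  simp only [id, Real.sqrt_sq (norm_nonneg _)] at hsqrt
  convert! hsqrt using 1
  ext v
  simp only [NormedSpace.normalize, map_smul, smul_apply, InnerProductSpace.toDual_apply_apply,
    smul_eq_mul, one_div, mul_inv_rev, ContinuousLinearMap.comp_id, coe_innerSL_apply,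
    nsmul_eq_mul, Nat.cast_ofNat]
  ring

lemma hasGradientAt_inner_normalize {x : E} (hx : x ≠ 0) (v : E) :
    HasGradientAt (fun z => ⟪v, normalize z⟫)
      (‖x‖⁻¹ • (v - ⟪v, normalize x⟫ • normalize x)) x := by
  have hinv := (hasDerivAt_inv (norm_ne_zero_iff.2 hx)).comp_hasFDerivAt x
    (hasGradientAt_norm hx).hasFDerivAt
  have hmul := hinv.mul (innerSL ℝ v).hasFDerivAt
  rw [hasGradientAt_iff_hasFDerivAt]
  convert! hmul using 1
  · ext z
    simp [NormedSpace.normalize, real_inner_smul_right]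
  · ext w
    simp only [NormedSpace.normalize, real_inner_smul_right, map_smul, map_sub, smul_apply,
      sub_apply, InnerProductSpace.toDual_apply_apply, smul_eq_mul, Function.comp_apply,
      coe_innerSL_apply, neg_smul, smul_neg, add_apply, neg_apply]
    field_simp
    ring

end InnerProductSpace

lemma sum_le_sqrt_card_mul_norm {ι : Type*} [Fintype ι] (x : EuclideanSpace ℝ ι) :
    ∑ i, x i ≤ √(Fintype.card ι) * ‖x‖ := by
  rw [EuclideanSpace.norm_eq, ← Real.sqrt_mul (Nat.cast_nonneg _)]
  refine Real.le_sqrt_of_sq_le ?_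
  simpa using sq_sum_le_card_mul_sum_sq (s := Finset.univ) (f := fun i => x i)

lemma ne_zero_of_sum_eq_one {ι : Type*} [Fintype ι] {x : EuclideanSpace ℝ ι}
    (hx : ∑ i, x i = 1) : x ≠ 0 := by
  rintro rfl
  simp at hx

section SphericalLoss

open NormedSpace
open scoped RealInnerProductSpace

variable {d : ℕ}

lemma norm_basisVec (y : Fin d) : ‖basisVec y‖ = 1 := by
  simp [basisVec]

lemma sphLoss_eq_one_sub_inner (p : EuclideanSpace ℝ (Fin d)) (y : Fin d) :
    sphLoss p y = 1 - ⟪basisVec y, normalize p⟫ := by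
  simp [sphLoss, basisVec, NormedSpace.normalize, EuclideanSpace.inner_single_left,
    div_eq_inv_mul]

lemma sphLoss_smul_of_pos {r : ℝ} (hr : 0 < r) (p : EuclideanSpace ℝ (Fin d)) (y : Fin d) :
    sphLoss (r • p) y = sphLoss p y := by
  simp only [sphLoss_eq_one_sub_inner, normalize_smul_of_pos hr]

lemma sphLoss_zero (y : Fin d) : sphLoss 0 y = 1 := by
  simp [sphLoss]

lemma sphLoss_le_one {p : EuclideanSpace ℝ (Fin d)} {y : Fin d} (hp : 0 ≤ p y) :
    sphLoss p y ≤ 1 :=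
  sub_le_self _ (by positivity)

lemma hasGradientAt_sphLoss {p : EuclideanSpace ℝ (Fin d)} (hp : p ≠ 0) (y : Fin d) :
    HasGradientAt (fun z => sphLoss z y)
      (-(‖p‖⁻¹ • (basisVec y - ⟪basisVec y, normalize p⟫ • normalize p))) p := by
  simp only [sphLoss_eq_one_sub_inner]
  rw [hasGradientAt_iff_hasFDerivAt, map_neg]
  exact (hasGradientAt_inner_normalize hp (basisVec y)).hasFDerivAt.const_sub 1

lemma norm_gradient_sphLoss_le {p : EuclideanSpace ℝ (Fin d)} (hp : p ≠ 0) (y : Fin d) :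
    ‖gradient (fun z => sphLoss z y) p‖ ≤ ‖p‖⁻¹ := by
  rw [(hasGradientAt_sphLoss hp y).gradient, norm_neg, norm_smul, norm_inv, norm_norm]
  refine mul_le_of_le_one_right (by positivity) ?_
  exact (norm_sub_inner_smul_le (norm_normalize hp) _).trans_eq (norm_basisVec y)

lemma norm_gradient_sphLoss_le_sqrt {p : EuclideanSpace ℝ (Fin d)} (hp : ∑ j, p j = 1)
    (y : Fin d) : ‖gradient (fun z => sphLoss z y) p‖ ≤ √d := by
  have hp0 : p ≠ 0 := ne_zero_of_sum_eq_one hp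
  have hsqrt : 1 ≤ √d * ‖p‖ := by simpa [hp] using sum_le_sqrt_card_mul_norm p
  calc ‖gradient (fun z => sphLoss z y) p‖ ≤ ‖p‖⁻¹ := norm_gradient_sphLoss_le hp0 y
    _ ≤ √d := (inv_le_iff_one_le_mul₀ (norm_pos_iff.2 hp0)).2 hsqrt

lemma sum_sum_basisVec_apply (y : ℕ → Fin d) (n : ℕ) :
    ∑ j, (∑ t ∈ Finset.range n, basisVec (y t)) j = n := by
  simp only [WithLp.ofLp_sum, Finset.sum_apply]
  rw [Finset.sum_comm]
  simp [basisVec]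

lemma sum_sphLoss_leader_sub_le (y : ℕ → Fin d) (q : EuclideanSpace ℝ (Fin d)) (T : ℕ) :
    ∑ t ∈ Finset.range T,
        (sphLoss (∑ s ∈ Finset.range t, basisVec (y s)) (y t) - sphLoss q (y t)) ≤
      √d * harmonic T := by
  have hcount (n : ℕ) : n ≤ √d * ‖∑ t ∈ Finset.range n, basisVec (y t)‖ := by
    simpa only [sum_sum_basisVec_apply, Fintype.card_fin] using
      sum_le_sqrt_card_mul_norm (∑ t ∈ Finset.range n, basisVec (y t))
  refine (Finset.sum_congr rfl fun t _ => ?_).trans_le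
    (sum_inner_normalize_sub_le_mul_harmonic (fun t => (norm_basisVec (y t)).le) hcount q T)
  simp only [sphLoss_eq_one_sub_inner, real_inner_comm (basisVec (y t))]
  ring

-- At `t = 0` the right-hand side is the loss of the zero vector, which is `1` as `x / 0 = 0`.
lemma sphLoss_le_sphLoss_leader {T t : ℕ} {y : ℕ → Fin d} {p : ℕ → EuclideanSpace ℝ (Fin d)}
    (hp1 : sphLoss (p 1) (y 0) ≤ 1)
    (hpt : ∀ t, 2 ≤ t → t ≤ T →
      p t = ((t : ℝ) - 1)⁻¹ • ∑ s ∈ Finset.range (t - 1), basisVec (y s)) (ht : t < T) :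
    sphLoss (p (t + 1)) (y t) ≤ sphLoss (∑ s ∈ Finset.range t, basisVec (y s)) (y t) := by
  rcases t.eq_zero_or_pos with rfl | ht0
  · simpa [sphLoss_zero] using hp1
  · rw [hpt (t + 1) (by lia) ht, Nat.cast_add_one, add_sub_cancel_right, Nat.add_sub_cancel,
      sphLoss_smul_of_pos (by positivity)]

end SphericalLoss

theorem stmt6_general {d T : ℕ} (y : ℕ → Fin d) (p : ℕ → EuclideanSpace ℝ (Fin d))
    (hp1 : sphLoss (p 1) (y 0) ≤ 1)
    (hpt : ∀ t, 2 ≤ t → t ≤ T →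
        p t = ((t : ℝ) - 1)⁻¹ • ∑ s ∈ Finset.range (t - 1), basisVec (y s)) :
    (∀ pp : EuclideanSpace ℝ (Fin d), ∑ j, pp j = 1 → ∀ yy : Fin d,
        ‖gradient (fun qq => sphLoss qq yy) pp‖ ≤ √d) ∧
    (∀ q : EuclideanSpace ℝ (Fin d), q ≠ 0 →
        ∑ t ∈ Finset.range T, (sphLoss (p (t + 1)) (y t) - sphLoss q (y t))
          ≤ √d * (1 + Real.log T)) := by
  refine ⟨fun pp hpp yy => norm_gradient_sphLoss_le_sqrt hpp yy, fun q _ => ?_⟩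
  calc ∑ t ∈ Finset.range T, (sphLoss (p (t + 1)) (y t) - sphLoss q (y t))
    _ ≤ ∑ t ∈ Finset.range T,
          (sphLoss (∑ s ∈ Finset.range t, basisVec (y s)) (y t) - sphLoss q (y t)) := by
      gcongr with t ht
      exact sphLoss_le_sphLoss_leader hp1 hpt (Finset.mem_range.1 ht)
    _ ≤ √d * harmonic T := sum_sphLoss_leader_sub_le y q T
    _ ≤ √d * (1 + Real.log T) := by
      gcongr
      exact harmonic_le_one_add_log T

/-- Corollary `spherical-loss`: (a) sup-norm bound on the gradient of the spherical loss on
the simplex, and (b) the resulting FTL regret bound `4 √d (1 + log T)`. -/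
theorem stmt6 {d T : ℕ} (y : ℕ → Fin d) (p : ℕ → EuclideanSpace ℝ (Fin d))
    (hp1 : p 1 ∈ probSimplex d)
    (hpt : ∀ t, 2 ≤ t → t ≤ T →
        p t = ((t : ℝ) - 1)⁻¹ • ∑ s ∈ Finset.range (t - 1), basisVec (y s)) :
    (∀ pp ∈ probSimplex d, ∀ (yy i : Fin d),
        |gradient (fun qq => sphLoss qq yy) pp i| ≤ 2 * Real.sqrt d) ∧
    (∀ q ∈ probSimplex d,
        ∑ t ∈ Finset.range T, (sphLoss (p (t + 1)) (y t) - sphLoss q (y t))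
          ≤ 4 * Real.sqrt d * (1 + Real.log T)) := by
  have hd := Real.sqrt_nonneg (d : ℝ)
  have := Real.log_natCast_nonneg T
  obtain ⟨hgrad, hregret⟩ := stmt6_general y p (sphLoss_le_one (hp1.1 _)) hpt
  refine ⟨fun pp hpp yy i => ?_, fun q hq => ?_⟩
  · exact (PiLp.norm_apply_le _ i).trans ((hgrad pp hpp.2 yy).trans (by linarith))
  · exact (hregret q (ne_zero_of_sum_eq_one hq.2)).trans (by gcongr; linarith)
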